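/- arXiv:1011.4675 — 2 statements merged into one kernel-verified Lean document; each statement's English description precedes it below -/
import Mathlib

section
/- Let Λ be a nonempty finite set of even cardinality. Suppose the nonlinear term φ is symmetric, i.e. φ(K) = φ(Λ) − φ(Λ \ K) for every subset K ⊆ Λ, and suppose φ(Λ) = −2·u₀ − ∑_{j∈Λ} u₁(j). Then the alternating sum ∑_{K ⊆ Λ} (−1)^{|Λ \ K|} · Φ(K) equals 0. (This is the sufficient condition of Theorem 1 for the determinant of the projectivity matrix to vanish, expressed through the characterization of Lemma 1.) -/
open Finset Real

/-! Write `Φ K = sigmoid (ℓ K)` with `ℓ K = u₀ + ∑ j ∈ K, u₁ j + φ K`. The two conditions on `φ`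
give `ℓ (Λ \ K) = -ℓ K`, so `Φ K + Φ (Λ \ K) = 1`. As `Λ` has even cardinality, `K` and `Λ \ K`
carry the same sign. Fix `a ∈ Λ` and pair each `K` avoiding `a` with its complement: what remains
is the alternating sum of `1` over the subsets of `Λ \ {a}`, a set which is nonempty because its
cardinality is odd. -/

section PowersetSums

variable {ι : Type*} [DecidableEq ι]

lemma sum_powerset_sdiff {M : Type*} [AddCommMonoid M] (s : Finset ι) (f : Finset ι → M) :
    ∑ K ∈ s.powerset, f (s \ K) = ∑ K ∈ s.powerset, f K := by
  refine sum_nbij' (s \ ·) (s \ ·) ?_ ?_ ?_ ?_ ?_ <;> simp +contextual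

variable {s : Finset ι}

lemma sum_powerset_insert_eq_sum_add_sdiff {M : Type*} [AddCommMonoid M] {a : ι} (ha : a ∉ s)
    (f : Finset ι → M) :
    ∑ K ∈ (insert a s).powerset, f K = ∑ K ∈ s.powerset, (f K + f (insert a s \ K)) := by
  rw [sum_powerset_insert ha, ← sum_powerset_sdiff s fun K ↦ f (insert a K), ← sum_add_distrib]
  refine sum_congr rfl fun K hK ↦ ?_
  rw [insert_sdiff_of_notMem s fun haK ↦ ha (mem_powerset.mp hK haK)]

lemma neg_one_pow_card_sdiff_of_even {R : Type*} [Monoid R] [HasDistribNeg R] {K : Finset ι}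
    (hs : Even #s) (hK : K ⊆ s) : (-1 : R) ^ #(s \ K) = (-1) ^ #K := by
  rw [← card_sdiff_add_card_eq_card hK, Nat.even_add] at hs
  exact neg_one_pow_congr hs

lemma sum_powerset_neg_one_pow_card_sdiff_mul_eq_zero {R : Type*} [Ring R] {f : Finset ι → R}
    {c : R} (hne : s.Nonempty) (heven : Even #s) (hf : ∀ K ⊆ s, f K + f (s \ K) = c) :
    ∑ K ∈ s.powerset, (-1) ^ #(s \ K) * f K = 0 := by
  obtain ⟨a, ha⟩ := hne
  obtain ⟨t, hat, rfl⟩ : ∃ t, a ∉ t ∧ insert a t = s :=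
    ⟨s.erase a, notMem_erase a s, insert_erase ha⟩
  have ht : t.Nonempty := by
    rw [card_insert_of_notMem hat, Nat.even_add_one, Nat.not_even_iff_odd] at heven
    exact card_pos.mp heven.pos
  have hsigns : ∑ K ∈ t.powerset, (-1 : R) ^ #K = 0 :=
    mod_cast congrArg (Int.cast : ℤ → R) (sum_powerset_neg_one_pow_card_of_nonempty ht)
  calc
    ∑ K ∈ (insert a t).powerset, (-1) ^ #(insert a t \ K) * f K
    _ = ∑ K ∈ (insert a t).powerset, (-1) ^ #K * f K :=
      sum_congr rfl fun K hK ↦ by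
        rw [neg_one_pow_card_sdiff_of_even heven (mem_powerset.mp hK)]
    _ = ∑ K ∈ t.powerset, ((-1) ^ #K * f K +
          (-1) ^ #(insert a t \ K) * f (insert a t \ K)) :=
      sum_powerset_insert_eq_sum_add_sdiff hat _
    _ = ∑ K ∈ t.powerset, (-1) ^ #K * c :=
      sum_congr rfl fun K hK ↦ by
        have hKs : K ⊆ insert a t := (mem_powerset.mp hK).trans (subset_insert a t)
        rw [neg_one_pow_card_sdiff_of_even heven hKs, ← mul_add, hf K hKs]
    _ = 0 := by rw [← sum_mul, hsigns, zero_mul]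

end PowersetSums

lemma exp_div_one_add_exp_eq_sigmoid (x : ℝ) : exp x / (1 + exp x) = sigmoid x := by
  rw [sigmoid_def, exp_neg]
  field

/-- If the nonlinear term `φ` is symmetric (`φ K = φ Λ - φ (Λ \ K)` for all
`K ⊆ Λ`) and `φ Λ = -2·u₀ - ∑_{j∈Λ} u₁ j`, with `Λ` nonempty of even cardinality, then the
alternating sum `∑_{K ⊆ Λ} (-1)^{|Λ \ K|} · Φ K` vanishes. -/
theorem alternating_sum_eq_zero_of_symmetric
    {ι : Type*} [DecidableEq ι] (Λ : Finset ι) (hne : Λ.Nonempty)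
    (heven : Even Λ.card) (u₀ : ℝ) (u₁ : ι → ℝ) (φ : Finset ι → ℝ)
    (Φ : Finset ι → ℝ)
    (hΦ : ∀ K ⊆ Λ, Φ K =
      Real.exp (u₀ + ∑ j ∈ K, u₁ j + φ K) /
        (1 + Real.exp (u₀ + ∑ j ∈ K, u₁ j + φ K)))
    (hsym : ∀ K ⊆ Λ, φ K = φ Λ - φ (Λ \ K))
    (hφΛ : φ Λ = -2 * u₀ - ∑ j ∈ Λ, u₁ j) :
    ∑ K ∈ Λ.powerset, (-1 : ℝ) ^ (Λ \ K).card * Φ K = 0 := by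
  refine sum_powerset_neg_one_pow_card_sdiff_mul_eq_zero (c := 1) hne heven fun K hK ↦ ?_
  have hneg : u₀ + ∑ j ∈ Λ \ K, u₁ j + φ (Λ \ K) = -(u₀ + ∑ j ∈ K, u₁ j + φ K) := by
    linarith [hsym K hK, sum_sdiff (f := u₁) hK]
  rw [hΦ K hK, hΦ (Λ \ K) sdiff_subset, hneg]
  simp only [exp_div_one_add_exp_eq_sigmoid, sigmoid_neg, add_sub_cancel]
end

section
/- Let Λ be a nonempty finite linearly ordered set and let M be the projectivity matrix associated with Φ. Then det M = 0 if and only if ∑_{K ⊆ Λ} (−1)^{|Λ \ K|} · Φ(K) = 0. (Lemma 1, the determinant characterization of the projectivity matrix.) -/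
open Finset Real

/-!
The vector `v K = (-1) ^ #K` is annihilated by every row of the projectivity matrix `M` indexed by
a nonempty set, because removing the minimum flips the sign; the row indexed by `∅` sends it to the
alternating sum `S = ∑ K, (-1) ^ #K * Φ K`. Applying the adjugate to `M v = S e_∅` and reading off
the entry at `∅` gives `det M = S * M.adjugate ∅ ∅`. This cofactor is the determinant of `M` with
its row at `∅` replaced by `e_∅`, which is unitriangular for the grading by cardinality.
-/

section Matrix

variable {n R : Type*} [Fintype n] [DecidableEq n] [CommRing R] {M : Matrix n n R}

lemma det_mul_apply_of_mulVec_eq_single {v : n → R} {i : n} {c : R}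
    (hMv : M.mulVec v = Pi.single i c) (j : n) : M.det * v j = c * M.adjugate j i :=
  calc M.det * v j = (M.adjugate * M).mulVec v j := by
        rw [Matrix.adjugate_mul, Matrix.smul_mulVec, Matrix.one_mulVec, Pi.smul_apply, smul_eq_mul]
    _ = M.adjugate.mulVec (Pi.single i c) j := by rw [← Matrix.mulVec_mulVec, hMv]
    _ = c * M.adjugate j i := by rw [Matrix.mulVec, dotProduct_single, mul_comm]

lemma det_eq_one_of_blockTriangular {α : Type*} [LinearOrder α] {b : n → α}
    (hM : M.BlockTriangular b)
    (hblock : ∀ i j, b i = b j → M i j = (1 : Matrix n n R) i j) : M.det = 1 := by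
  rw [hM.det]
  refine prod_eq_one fun a _ ↦ ?_
  have hsquare : M.toSquareBlock b a = 1 := by
    ext i j
    rw [Matrix.toSquareBlock_def, Matrix.of_apply, hblock _ _ (i.2.trans j.2.symm),
      Matrix.one_apply, Matrix.one_apply]
    simp only [Subtype.ext_iff]
  rw [hsquare, Matrix.det_one]

end Matrix

section ProjectivityMatrix

variable {ι R : Type*} [LinearOrder ι]

/-- The projectivity matrix of an arbitrary function `Φ` on the finite subsets of `ι`: the row
indexed by `∅` lists the values of `Φ`, and the row indexed by a nonempty `K` is the indicator of
`{K, K \ {min K}}`. -/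
def projectivityMatrix [Zero R] [One R] (Φ : Finset ι → R) : Matrix (Finset ι) (Finset ι) R :=
  .of fun K K' ↦ if hK : K.Nonempty
    then (if K' = K ∨ K' = K.erase (K.min' hK) then 1 else 0)
    else Φ K'

lemma projectivityMatrix_row_empty [Zero R] [One R] (Φ : Finset ι → R) :
    (projectivityMatrix Φ).row ∅ = Φ := by
  funext K'
  simp [projectivityMatrix]

lemma projectivityMatrix_row_of_nonempty [AddMonoidWithOne R] (Φ : Finset ι → R) {K : Finset ι}
    (hK : K.Nonempty) :
    (projectivityMatrix Φ).row K = Pi.single K 1 + Pi.single (K.erase (K.min' hK)) 1 := by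
  have hne : K ≠ K.erase (K.min' hK) := (erase_ssubset (K.min'_mem hK)).ne'
  funext K'
  rw [Matrix.row_apply, projectivityMatrix, Matrix.of_apply, dif_pos hK, Pi.add_apply,
    Pi.single_apply, Pi.single_apply]
  by_cases h : K' = K
  · simp [h, hne]
  · simp [h]

lemma projectivityMatrix_apply_of_card_le [AddMonoidWithOne R] (Φ : Finset ι → R)
    {K K' : Finset ι} (hK : K.Nonempty) (hcard : #K ≤ #K') :
    projectivityMatrix Φ K K' = (1 : Matrix _ _ R) K K' := by
  have hne : K' ≠ K.erase (K.min' hK) := by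
    rintro rfl
    exact hcard.not_gt (card_erase_lt_of_mem (K.min'_mem hK))
  rw [← Matrix.row_apply (projectivityMatrix Φ), projectivityMatrix_row_of_nonempty Φ hK,
    Pi.add_apply, Pi.single_eq_of_ne hne, add_zero, Matrix.one_eq_pi_single]

variable [Fintype ι] [CommRing R] (Φ : Finset ι → R)

lemma projectivityMatrix_mulVec_neg_one_pow_card :
    (projectivityMatrix Φ).mulVec (fun K ↦ (-1) ^ #K) =
      Pi.single ∅ (∑ K, (-1) ^ #K * Φ K) := by
  funext K
  change (projectivityMatrix Φ).row K ⬝ᵥ _ = _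
  rcases K.eq_empty_or_nonempty with rfl | hK
  · rw [projectivityMatrix_row_empty, dotProduct_comm, Pi.single_eq_same, dotProduct]
  · rw [projectivityMatrix_row_of_nonempty Φ hK, add_dotProduct, single_one_dotProduct,
      single_one_dotProduct, Pi.single_eq_of_ne hK.ne_empty,
      ← card_erase_add_one (K.min'_mem hK), pow_succ, mul_neg_one, neg_add_cancel]

lemma adjugate_projectivityMatrix_empty_empty : (projectivityMatrix Φ).adjugate ∅ ∅ = 1 := by
  rw [Matrix.adjugate_apply]
  have heq_one (K K' : Finset ι) (hcard : #K ≤ #K') :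
      (projectivityMatrix Φ).updateRow ∅ (Pi.single ∅ 1) K K' = (1 : Matrix _ _ R) K K' := by
    rcases K.eq_empty_or_nonempty with rfl | hK
    · rw [Matrix.updateRow_self, Matrix.one_eq_pi_single]
    · rw [Matrix.updateRow_ne hK.ne_empty, projectivityMatrix_apply_of_card_le Φ hK hcard]
  refine det_eq_one_of_blockTriangular (b := fun K ↦ OrderDual.toDual #K) ?_ ?_
  · intro K K' hlt
    have hcard : #K < #K' := OrderDual.toDual_lt_toDual.mp hlt
    rw [heq_one K K' hcard.le, Matrix.one_apply_ne (ne_of_apply_ne card hcard.ne)]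
  · exact fun K K' heq ↦ heq_one K K' (OrderDual.toDual_inj.mp heq).le

theorem det_projectivityMatrix :
    (projectivityMatrix Φ).det = ∑ K, (-1) ^ #K * Φ K := by
  simpa [adjugate_projectivityMatrix_empty_empty] using
    det_mul_apply_of_mulVec_eq_single (projectivityMatrix_mulVec_neg_one_pow_card Φ) ∅

end ProjectivityMatrix

lemma sum_neg_one_pow_card_compl_mul {ι R : Type*} [Fintype ι] [DecidableEq ι] [Ring R]
    (Φ : Finset ι → R) :
    ∑ K, (-1) ^ #Kᶜ * Φ K = (-1) ^ Fintype.card ι * ∑ K, (-1) ^ #K * Φ K := by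
  rw [mul_sum]
  refine sum_congr rfl fun K _ ↦ ?_
  rw [← card_compl_add_card K, pow_add, mul_assoc, ← mul_assoc ((-1) ^ #K),
    ← pow_add, (Even.add_self _).neg_one_pow, one_mul]

theorem det_projectivity_matrix_eq_zero_iff_general {ι R : Type*} [Fintype ι] [LinearOrder ι]
    [CommRing R] (Φ : Finset ι → R) :
    (projectivityMatrix Φ).det = 0 ↔ ∑ K, (-1) ^ #Kᶜ * Φ K = 0 := by
  rw [det_projectivityMatrix, sum_neg_one_pow_card_compl_mul,
    (isUnit_neg_one.pow _).mul_right_eq_zero]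

/-- Lemma 1: the determinant of the projectivity matrix `M` vanishes iff the
alternating sum `∑_{K ⊆ Λ} (-1)^{|Λ \ K|} Φ K` vanishes. Here the nonempty finite linearly
ordered set `Λ` is formalised as the finite linearly ordered nonempty type `ι`, and its
subsets as `Finset ι` (so `Λ \ K` is `Kᶜ`). -/
theorem det_projectivity_matrix_eq_zero_iff
    {ι : Type*} [Fintype ι] [LinearOrder ι] [Nonempty ι]
    (u₀ : ℝ) (u₁ : ι → ℝ) (φ : Finset ι → ℝ) (Φ : Finset ι → ℝ)
    (hΦ : ∀ K : Finset ι, Φ K =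
      Real.exp (u₀ + ∑ j ∈ K, u₁ j + φ K) /
        (1 + Real.exp (u₀ + ∑ j ∈ K, u₁ j + φ K)))
    (M : Matrix (Finset ι) (Finset ι) ℝ)
    (hM : ∀ K K' : Finset ι,
      M K K' = if hK : K.Nonempty
        then (if K' = K ∨ K' = K.erase (K.min' hK) then 1 else 0)
        else Φ K') :
    M.det = 0 ↔ ∑ K : Finset ι, (-1 : ℝ) ^ Kᶜ.card * Φ K = 0 := by
  obtain rfl : M = projectivityMatrix Φ := Matrix.ext hM
  exact det_projectivity_matrix_eq_zero_iff_general Φ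
end
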